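/- arXiv:2312.03778 — 3 statements merged into one kernel-verified Lean document; each statement's English description precedes it below -/
import Mathlib

section
/- Let H be an n×n complex matrix that is a contraction (H*H ≤ I), let B be an n×n Hermitian matrix, and let X be an n×n positive definite matrix with Tr(X) = 1. Then S_H(X | exp(B)) equals the supremum, over all n×n Hermitian matrices A, of Tr(X A) − log Tr(exp(A + H B H*)) − 1 + Tr(exp(B)), and this supremum is attained (at A₀ = log X − H B H*). -/
open Matrix ComplexOrder

/-- Matrix logarithm of a (positive definite) Hermitian matrix, via functional calculus. -/
noncomputable def mlog {n : ℕ} (A : Matrix (Fin n) (Fin n) ℂ) : Matrix (Fin n) (Fin n) ℂ :=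
  cfc Real.log A

/-- Matrix exponential of a Hermitian matrix, via functional calculus. -/
noncomputable def mexp {n : ℕ} (A : Matrix (Fin n) (Fin n) ℂ) : Matrix (Fin n) (Fin n) ℂ :=
  cfc Real.exp A

/-- Real power of a (positive definite) Hermitian matrix, via functional calculus. -/
noncomputable def mpow {n : ℕ} (A : Matrix (Fin n) (Fin n) ℂ) (p : ℝ) : Matrix (Fin n) (Fin n) ℂ :=
  cfc (fun x : ℝ => x ^ p) A

/-- Deformed logarithm `log_q x = (x^(q-1) - 1)/(q-1)`. -/
noncomputable def logq (q x : ℝ) : ℝ := (x ^ (q - 1) - 1) / (q - 1)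

/-- Deformed exponential `exp_q x = (1 + (q-1)x)^(1/(q-1))`, with `exp_1 = exp`. -/
noncomputable def expq (q x : ℝ) : ℝ :=
  if q = 1 then Real.exp x else (1 + (q - 1) * x) ^ (1 / (q - 1))

/-- Deformed logarithm of a positive definite matrix, via functional calculus. -/
noncomputable def mlogq {n : ℕ} (q : ℝ) (A : Matrix (Fin n) (Fin n) ℂ) :
    Matrix (Fin n) (Fin n) ℂ :=
  cfc (logq q) A

/-- Deformed exponential of a Hermitian matrix, via functional calculus. -/
noncomputable def mexpq {m : ℕ} (q : ℝ) (A : Matrix (Fin m) (Fin m) ℂ) :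
    Matrix (Fin m) (Fin m) ℂ :=
  cfc (expq q) A

/-- Real part of the trace. -/
noncomputable def trRe {n : ℕ} (M : Matrix (Fin n) (Fin n) ℂ) : ℝ := (Matrix.trace M).re

/-- The reduced relative entropy `S_H(A | B) = Tr[A log A - H* A H log B - A + B]`. -/
noncomputable def SH {n : ℕ} (H A B : Matrix (Fin n) (Fin n) ℂ) : ℝ :=
  trRe (A * mlog A - Hᴴ * A * H * mlog B - A + B)

/-- The reduced Tsallis relative entropy
`S_{H,q}(A | B) = Tr[A^(2-q) log_q A - H* A^(2-q) H log_q B - A + B]`. -/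
noncomputable def STq {n : ℕ} (H : Matrix (Fin n) (Fin n) ℂ) (q : ℝ)
    (A B : Matrix (Fin n) (Fin n) ℂ) : ℝ :=
  trRe (mpow A (2 - q) * mlogq q A - Hᴴ * mpow A (2 - q) * H * mlogq q B - A + B)

/-!
With `C = A + H B H*`, the cyclicity of the trace turns the claim into the Gibbs variational
principle `Tr X C - log Tr exp C ≤ Tr X log X`, with equality at `C = log X`.

If `u i` and `v j` are orthonormal eigenbases of Hermitian matrices `A` and `B`, then
`Tr f(A) g(B)` is the sum of the `f(λ i) g(μ j)` with weights `|⟪u i, v j⟫|²`, which do not depend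
on `f` and `g`. Hence a scalar inequality `x y ≤ f(x) + g(y)` on the spectra gives
`Tr A B ≤ Tr f(A) + Tr g(B)`. The principle follows from the Fenchel inequality
`x y ≤ x log x + (t - 1) x + exp (y - t)`, whose optimal shift is `t = log Tr exp C`.
-/

theorem mul_le_mul_log_sub_add_exp {x : ℝ} (hx : 0 ≤ x) (y : ℝ) :
    x * y ≤ x * Real.log x - x + Real.exp y := by
  obtain rfl | hx := hx.eq_or_lt
  · simpa using (Real.exp_pos y).le
  · have h := mul_le_mul_of_nonneg_left (Real.add_one_le_exp (y - Real.log x)) hx.le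
    rw [Real.exp_sub, Real.exp_log hx, mul_div_cancel₀ _ hx.ne'] at h
    linarith

section FunctionalCalculus

variable {R : Type*} [Ring R] [StarRing R] [TopologicalSpace R] [Algebra ℝ R]
  [ContinuousFunctionalCalculus ℝ R IsSelfAdjoint] [ContinuousMap.UniqueHom ℝ R] {a : R}

theorem cfc_log_cfc_exp (ha : IsSelfAdjoint a) : cfc Real.log (cfc Real.exp a) = a := by
  have hlog : ContinuousOn Real.log (Real.exp '' spectrum ℝ a) :=
    Real.continuousOn_log.mono <| by
      rintro _ ⟨x, -, rfl⟩
      exact (Real.exp_pos x).ne'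
  rw [← cfc_comp' Real.log Real.exp a hlog]
  simp only [Real.log_exp]
  exact cfc_id' ℝ a

theorem cfc_exp_cfc_log (ha : IsSelfAdjoint a) (hpos : ∀ x ∈ spectrum ℝ a, 0 < x) :
    cfc Real.exp (cfc Real.log a) = a := by
  have hlog : ContinuousOn Real.log (spectrum ℝ a) :=
    Real.continuousOn_log.mono fun x hx => (hpos x hx).ne'
  rw [← cfc_comp' Real.exp Real.log a (by fun_prop) hlog,
    cfc_congr fun x hx => Real.exp_log (hpos x hx), cfc_id' ℝ a]

end FunctionalCalculus

section Trace

variable {m n 𝕜 : Type*} [RCLike 𝕜] [Fintype m] [Fintype n] [DecidableEq m] [DecidableEq n]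

theorem trace_diagonal_mul_mul_diagonal_mul_conjTranspose (d : m → 𝕜) (e : n → 𝕜)
    (W : Matrix m n 𝕜) :
    (diagonal d * W * diagonal e * Wᴴ).trace = ∑ i, ∑ j, (‖W i j‖ : 𝕜) ^ 2 * (d i * e j) := by
  simp only [trace, diag_apply, mul_apply (N := Wᴴ), mul_diagonal, diagonal_mul,
    conjTranspose_apply]
  refine Finset.sum_congr rfl fun i _ => Finset.sum_congr rfl fun j _ => ?_
  rw [← RCLike.mul_conj, RCLike.star_def]
  ring

variable {A B X C : Matrix n n 𝕜}

theorem trace_cfc (hA : A.IsHermitian) (f : ℝ → ℝ) :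
    (cfc f A).trace = ∑ i, (f (hA.eigenvalues i) : 𝕜) := by
  rw [hA.cfc_eq, IsHermitian.cfc, Unitary.conjStarAlgAut_apply, trace_mul_cycle,
    Unitary.coe_star_mul_self, Matrix.one_mul, trace_diagonal]
  rfl

theorem trace_cfc_mul_cfc (hA : A.IsHermitian) (hB : B.IsHermitian) (f g : ℝ → ℝ) :
    (cfc f A * cfc g B).trace =
      ∑ i, ∑ j, (‖(star hA.eigenvectorUnitary * hB.eigenvectorUnitary).1 i j‖ : 𝕜) ^ 2 *
        (f (hA.eigenvalues i) * g (hB.eigenvalues j)) := by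
  set U : Matrix n n 𝕜 := hA.eigenvectorUnitary.1
  set V : Matrix n n 𝕜 := hB.eigenvectorUnitary.1
  set D : Matrix n n 𝕜 := diagonal (RCLike.ofReal ∘ f ∘ hA.eigenvalues)
  set E : Matrix n n 𝕜 := diagonal (RCLike.ofReal ∘ g ∘ hB.eigenvalues)
  calc (cfc f A * cfc g B).trace
      = (U * (D * Uᴴ * V * E * Vᴴ)).trace := by
        rw [hA.cfc_eq, hB.cfc_eq, IsHermitian.cfc, IsHermitian.cfc,
          Unitary.conjStarAlgAut_apply, Unitary.conjStarAlgAut_apply]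
        simp only [Matrix.mul_assoc]
        rfl
    _ = (D * (Uᴴ * V) * E * (Uᴴ * V)ᴴ).trace := by
        rw [trace_mul_comm, conjTranspose_mul, conjTranspose_conjTranspose]
        simp only [Matrix.mul_assoc]
    _ = _ := trace_diagonal_mul_mul_diagonal_mul_conjTranspose _ _ _

theorem re_trace_mul_le_of_forall_mul_le_add (hA : A.IsHermitian) (hB : B.IsHermitian) {f g : ℝ → ℝ}
    (hfg : ∀ x ∈ spectrum ℝ A, ∀ y ∈ spectrum ℝ B, x * y ≤ f x + g y) :
    RCLike.re (A * B).trace ≤ RCLike.re (cfc f A).trace + RCLike.re (cfc g B).trace := by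
  have hre (u v : ℝ → ℝ) : RCLike.re (cfc u A * cfc v B).trace =
      ∑ i, ∑ j, ‖(star hA.eigenvectorUnitary * hB.eigenvectorUnitary).1 i j‖ ^ 2 *
        (u (hA.eigenvalues i) * v (hB.eigenvalues j)) := by
    rw [trace_cfc_mul_cfc hA hB]
    norm_cast
  have hAB := hre (fun x => x) fun y => y
  have hf := hre f fun _ => 1
  have hg := hre (fun _ => 1) g
  rw [cfc_id' ℝ A hA.isSelfAdjoint, cfc_id' ℝ B hB.isSelfAdjoint] at hAB
  rw [cfc_const_one ℝ B hB.isSelfAdjoint, Matrix.mul_one] at hf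
  rw [cfc_const_one ℝ A hA.isSelfAdjoint, Matrix.one_mul] at hg
  rw [hAB, hf, hg]
  simp only [← Finset.sum_add_distrib, ← mul_add, mul_one, one_mul]
  gcongr with i _ j _
  exact hfg _ (hA.eigenvalues_mem_spectrum_real i) _ (hB.eigenvalues_mem_spectrum_real j)

theorem re_trace_mul_le_add_exp_neg_mul (hX : X.PosSemidef) (hC : C.IsHermitian) (t : ℝ) :
    RCLike.re (X * C).trace ≤ RCLike.re (X * cfc Real.log X).trace +
      (t - 1) * RCLike.re X.trace + Real.exp (-t) * RCLike.re (cfc Real.exp C).trace := by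
  have hXs := hX.isHermitian.isSelfAdjoint
  have hcont (f : ℝ → ℝ) : ContinuousOn f (spectrum ℝ X) := finite_real_spectrum.continuousOn f
  have hnonneg : ∀ x ∈ spectrum ℝ X, 0 ≤ x := by
    open scoped MatrixOrder in exact fun x hx => spectrum_nonneg_of_nonneg hX.nonneg hx
  have hentropy : cfc (fun x => x * Real.log x + (t - 1) * x) X =
      X * cfc Real.log X + (t - 1) • X := by
    rw [cfc_add _ _ _ (hcont _) (hcont _), cfc_mul _ _ _ (hcont _) (hcont _),
      cfc_const_mul _ _ _ (hcont _), cfc_id' ℝ X]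
  have hexp : cfc (fun y => Real.exp (-t) * Real.exp y) C = Real.exp (-t) • cfc Real.exp C :=
    cfc_const_mul ..
  have hfenchel : ∀ x ∈ spectrum ℝ X, ∀ y ∈ spectrum ℝ C,
      x * y ≤ (x * Real.log x + (t - 1) * x) + Real.exp (-t) * Real.exp y := fun x hx y _ => by
    have h := mul_le_mul_log_sub_add_exp (hnonneg x hx) (-t + y)
    rw [Real.exp_add] at h
    linarith
  simpa only [hentropy, hexp, trace_add, trace_smul, map_add, RCLike.smul_re] using
    re_trace_mul_le_of_forall_mul_le_add hX.isHermitian hC hfenchel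

theorem re_trace_cfc_exp_pos [Nonempty n] (hC : C.IsHermitian) :
    0 < RCLike.re (cfc Real.exp C).trace := by
  rw [trace_cfc hC, ← RCLike.ofReal_sum, RCLike.ofReal_re]
  exact Finset.sum_pos (fun i _ => Real.exp_pos _) Finset.univ_nonempty

theorem re_trace_mul_sub_log_le (hX : X.PosSemidef) (hTr : X.trace = 1) (hC : C.IsHermitian) :
    RCLike.re (X * C).trace - Real.log (RCLike.re (cfc Real.exp C).trace) ≤
      RCLike.re (X * cfc Real.log X).trace := by
  have : Nonempty n := by
    by_contra! h
    simp [trace] at hTr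
  have hpos := re_trace_cfc_exp_pos hC
  have h := re_trace_mul_le_add_exp_neg_mul hX hC (Real.log (RCLike.re (cfc Real.exp C).trace))
  rw [hTr, RCLike.one_re, Real.exp_neg, Real.exp_log hpos, inv_mul_cancel₀ hpos.ne'] at h
  linarith

end Trace

theorem SH_mexp {n : ℕ} (H X : Matrix (Fin n) (Fin n) ℂ) {B : Matrix (Fin n) (Fin n) ℂ}
    (hB : B.IsHermitian) :
    SH H X (mexp B) = trRe (X * (mlog X - H * B * Hᴴ)) - trRe X + trRe (mexp B) := by
  have hcyc : (Hᴴ * X * H * B).trace = (X * (H * B * Hᴴ)).trace := by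
    rw [Matrix.mul_assoc Hᴴ, Matrix.mul_assoc Hᴴ, trace_mul_comm]
    simp only [Matrix.mul_assoc]
  have hlog_exp : mlog (mexp B) = B := cfc_log_cfc_exp hB.isSelfAdjoint
  simp [SH, hlog_exp, trRe, Matrix.mul_sub, hcyc]

theorem stmt1_general {n : ℕ} (H B X : Matrix (Fin n) (Fin n) ℂ)
    (hB : B.IsHermitian) (hX : X.PosDef) (hTr : Matrix.trace X = 1) :
    IsGreatest
      {r : ℝ | ∃ A : Matrix (Fin n) (Fin n) ℂ, A.IsHermitian ∧
        r = trRe (X * A) - Real.log (trRe (mexp (A + H * B * Hᴴ))) - 1 + trRe (mexp B)}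
      (SH H X (mexp B)) := by
  have hHBH : (H * B * Hᴴ).IsHermitian := isHermitian_mul_mul_conjTranspose H hB
  have hX_one : trRe X = 1 := by simp [trRe, hTr]
  rw [SH_mexp H X hB, hX_one]
  constructor
  · have hlogX : (mlog X).IsHermitian := cfc_predicate Real.log X
    have hexp_log : mexp (mlog X) = X := by
      open scoped MatrixOrder in
      exact cfc_exp_cfc_log hX.isHermitian.isSelfAdjoint fun x hx =>
        hX.isStrictlyPositive.spectrum_pos hx
    refine ⟨mlog X - H * B * Hᴴ, hlogX.sub hHBH, ?_⟩
    rw [sub_add_cancel, hexp_log, hX_one, Real.log_one, sub_zero]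
  · rintro _ ⟨A, hA, rfl⟩
    have hgibbs : trRe (X * (A + H * B * Hᴴ)) - Real.log (trRe (mexp (A + H * B * Hᴴ))) ≤
        trRe (X * mlog X) := re_trace_mul_sub_log_le hX.posSemidef hTr (hA.add hHBH)
    simp only [Matrix.mul_add, Matrix.mul_sub, trRe, trace_add, trace_sub, Complex.add_re,
      Complex.sub_re] at hgibbs ⊢
    linarith

/-- Variational expression: for a contraction H, Hermitian B and positive definite X
with Tr X = 1, S_H(X | exp B) is the attained supremum of
Tr(X A) - log Tr exp(A + H B H*) - 1 + Tr exp(B) over Hermitian A. -/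
theorem stmt1 {n : ℕ} (H B X : Matrix (Fin n) (Fin n) ℂ)
    (hH : (1 - Hᴴ * H).PosSemidef) (hB : B.IsHermitian) (hX : X.PosDef)
    (hTr : Matrix.trace X = 1) :
    IsGreatest
      {r : ℝ | ∃ A : Matrix (Fin n) (Fin n) ℂ, A.IsHermitian ∧
        r = trRe (X * A) - Real.log (trRe (mexp (A + H * B * Hᴴ))) - 1 + trRe (mexp B)}
      (SH H X (mexp B)) :=
  stmt1_general H B X hB hX hTr
end

section
/- Let B be an n×n Hermitian matrix and let H be an n×n contraction (H*H ≤ I, equivalently HH* ≤ I). Then Tr(exp(H B H*)) ≤ Tr(H exp(B) H*) + Tr(I − H H*), where exp denotes the matrix exponential. -/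
open Matrix ComplexOrder

/-!
Diagonalize `A = H * B * Hᴴ` by an orthonormal eigenbasis `v i`, so that `Tr f(A)` is the sum of the
values `f ⟨v i, A v i⟩ = f ⟨x i, B x i⟩`, where `x i = Hᴴ v i` has norm at most one. The number
`⟨x i, B x i⟩` is the mean of the spectral measure of `B` at `x i`, which has mass `‖x i‖²`; putting
the missing mass `1 - ‖x i‖²` at the point `0` turns it into a probability measure with the same
mean. Jensen's inequality bounds `f ⟨x i, B x i⟩` by `⟨x i, f(B) x i⟩ + (1 - ‖x i‖²) f 0`, and
summing over the eigenbasis gives the trace inequality.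
-/

section Contraction

variable {R m n : Type*} [Ring R] [PartialOrder R] [StarRing R] [StarOrderedRing R]
  [Fintype m] [Fintype n] [DecidableEq m] [DecidableEq n]

theorem posSemidef_one_sub_mul_conjTranspose {H : Matrix m n R} (hH : (1 - Hᴴ * H).PosSemidef) :
    (1 - H * Hᴴ).PosSemidef := by
  have decomposition :
      1 - H * Hᴴ = (1 - H * Hᴴ) * (1 - H * Hᴴ)ᴴ + H * (1 - Hᴴ * H) * Hᴴ := by
    simp only [conjTranspose_sub, conjTranspose_one, conjTranspose_mul, conjTranspose_conjTranspose,
      Matrix.mul_sub, Matrix.sub_mul, Matrix.mul_one, Matrix.one_mul, Matrix.mul_assoc]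
    abel
  rw [decomposition]
  exact (posSemidef_self_mul_conjTranspose _).add (hH.mul_mul_conjTranspose_same H)

end Contraction

variable {𝕜 m n : Type*} [RCLike 𝕜] [Fintype m] [Fintype n]

/-- The real part of the quadratic form `⟨x, M x⟩` of `M`. For Hermitian `M` and a unit vector
`x` this is the expectation of `M` in the state `x`. It is stated for plain functions `n → 𝕜`, on
which matrices act by `*ᵥ`, rather than for `EuclideanSpace 𝕜 n`. -/
def reQuadForm (M : Matrix n n 𝕜) (x : n → 𝕜) : ℝ :=
  RCLike.re (star x ⬝ᵥ M *ᵥ x)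

theorem reQuadForm_sub (M N : Matrix n n 𝕜) (x : n → 𝕜) :
    reQuadForm (M - N) x = reQuadForm M x - reQuadForm N x := by
  simp only [reQuadForm, sub_mulVec, dotProduct_sub, map_sub]

theorem reQuadForm_mul_mul_conjTranspose (H : Matrix m n 𝕜) (M : Matrix n n 𝕜) (x : m → 𝕜) :
    reQuadForm (H * M * Hᴴ) x = reQuadForm M (Hᴴ *ᵥ x) := by
  simp only [reQuadForm, star_mulVec, conjTranspose_conjTranspose, ← dotProduct_mulVec,
    mulVec_mulVec, Matrix.mul_assoc]

theorem re_trace_eq_sum_reQuadForm {ι : Type*} [Fintype ι]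
    (v : OrthonormalBasis ι 𝕜 (EuclideanSpace 𝕜 n)) (M : Matrix n n 𝕜) :
    RCLike.re M.trace = ∑ i, reQuadForm M (v i) := by
  classical
  have htrace : LinearMap.trace 𝕜 _ (toEuclideanLin M) = M.trace := by
    simp [toLpLin_eq_toLin, trace_toLin_eq]
  rw [← htrace, LinearMap.trace_eq_sum_inner _ v, map_sum]
  simp only [reQuadForm, EuclideanSpace.inner_eq_star_dotProduct, toLpLin_apply, dotProduct_comm]

variable [DecidableEq n]

theorem reQuadForm_one_orthonormalBasis {ι : Type*} [Fintype ι]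
    (v : OrthonormalBasis ι 𝕜 (EuclideanSpace 𝕜 n)) (i : ι) :
    reQuadForm (1 : Matrix n n 𝕜) (v i) = 1 := by
  rw [reQuadForm, one_mulVec, dotProduct_comm, ← EuclideanSpace.inner_eq_star_dotProduct,
    inner_self_eq_norm_sq, v.norm_eq_one, one_pow]

section SpectralMeasure

variable {A : Matrix n n 𝕜} (hA : A.IsHermitian)

/-- The mass that the spectral measure of the Hermitian matrix `A` at the vector `x` gives to the
`j`-th eigenvector: the squared modulus of the `j`-th coordinate of `x` in the eigenbasis of `A`. -/
noncomputable def spectralWeight (x : n → 𝕜) (j : n) : ℝ :=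
  ‖(star (hA.eigenvectorUnitary : Matrix n n 𝕜) *ᵥ x) j‖ ^ 2

theorem spectralWeight_nonneg (x : n → 𝕜) (j : n) : 0 ≤ spectralWeight hA x j :=
  sq_nonneg _

theorem reQuadForm_cfc (f : ℝ → ℝ) (x : n → 𝕜) :
    reQuadForm (cfc f A) x = ∑ j, spectralWeight hA x j * f (hA.eigenvalues j) := by
  rw [hA.cfc_eq, IsHermitian.cfc, Unitary.conjStarAlgAut_apply, star_eq_conjTranspose,
    reQuadForm_mul_mul_conjTranspose, reQuadForm, dotProduct, map_sum]
  refine Finset.sum_congr rfl fun j _ => ?_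
  rw [mulVec_diagonal, spectralWeight, mul_left_comm, Pi.star_apply, RCLike.star_def,
    RCLike.conj_mul, star_eq_conjTranspose, mul_comm, ← RCLike.ofReal_pow, RCLike.re_ofReal_mul]
  simp only [Function.comp_apply, RCLike.ofReal_re]

theorem reQuadForm_eq_sum_spectralWeight (x : n → 𝕜) :
    reQuadForm A x = ∑ j, spectralWeight hA x j * hA.eigenvalues j := by
  simpa only [cfc_id' ℝ A hA.isSelfAdjoint] using reQuadForm_cfc hA (fun t => t) x

theorem sum_spectralWeight (x : n → 𝕜) :
    ∑ j, spectralWeight hA x j = reQuadForm (1 : Matrix n n 𝕜) x := by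
  simpa only [cfc_const_one ℝ A hA.isSelfAdjoint, mul_one] using
    (reQuadForm_cfc hA (fun _ => 1) x).symm

theorem re_trace_cfc_eq_sum_eigenvalues (f : ℝ → ℝ) :
    RCLike.re (cfc f A).trace = ∑ i, f (hA.eigenvalues i) := by
  rw [hA.cfc_eq, IsHermitian.cfc, Unitary.conjStarAlgAut_apply, trace_mul_cycle,
    Unitary.coe_star_mul_self, one_mul, trace_diagonal, map_sum]
  simp only [Function.comp_apply, RCLike.ofReal_re]

end SpectralMeasure

theorem map_reQuadForm_le_reQuadForm_cfc_add {s : Set ℝ} {f : ℝ → ℝ} (hf : ConvexOn ℝ s f)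
    {A : Matrix n n 𝕜} (hA : A.IsHermitian) (hAs : spectrum ℝ A ⊆ s) (h0 : 0 ∈ s)
    {x : n → 𝕜} (hx : reQuadForm (1 : Matrix n n 𝕜) x ≤ 1) :
    f (reQuadForm A x) ≤
      reQuadForm (cfc f A) x + (1 - reQuadForm (1 : Matrix n n 𝕜) x) * f 0 := by
  have jensen := hf.map_add_sum_le (t := Finset.univ) (w := spectralWeight hA x)
    (p := hA.eigenvalues) (v := 1 - reQuadForm (1 : Matrix n n 𝕜) x) (q := 0)
    (fun j _ => spectralWeight_nonneg hA x j) (by rw [sum_spectralWeight, sub_add_cancel])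
    (fun j _ => hAs (hA.eigenvalues_mem_spectrum_real j)) (sub_nonneg.mpr hx) h0
  simpa only [smul_eq_mul, mul_zero, add_zero, ← reQuadForm_eq_sum_spectralWeight,
    ← reQuadForm_cfc, add_comm] using jensen

/-- Brown and Kosaki's trace Jensen inequality is the case `f 0 ≤ 0`, in which the last term can be
dropped. -/
theorem stmt2_general [DecidableEq m] {s : Set ℝ} {f : ℝ → ℝ} (hf : ConvexOn ℝ s f)
    {B : Matrix n n 𝕜} {H : Matrix m n 𝕜} (hB : B.IsHermitian) (hBs : spectrum ℝ B ⊆ s)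
    (h0 : 0 ∈ s) (hH : (1 - Hᴴ * H).PosSemidef) :
    RCLike.re (cfc f (H * B * Hᴴ)).trace ≤
      RCLike.re (H * cfc f B * Hᴴ).trace + RCLike.re (1 - H * Hᴴ).trace * f 0 := by
  have hA : (H * B * Hᴴ).IsHermitian := isHermitian_mul_mul_conjTranspose H hB
  let v := hA.eigenvectorBasis
  have hdefect (i : m) :
      reQuadForm (1 - H * Hᴴ) (v i) = 1 - reQuadForm (1 : Matrix n n 𝕜) (Hᴴ *ᵥ v i) := by
    rw [reQuadForm_sub, reQuadForm_one_orthonormalBasis, ← reQuadForm_mul_mul_conjTranspose,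
      Matrix.mul_one]
  have hnorm (i : m) : reQuadForm (1 : Matrix n n 𝕜) (Hᴴ *ᵥ v i) ≤ 1 := by
    rw [← sub_nonneg, ← hdefect]
    exact (posSemidef_one_sub_mul_conjTranspose hH).re_dotProduct_nonneg _
  calc
    RCLike.re (cfc f (H * B * Hᴴ)).trace = ∑ i, f (reQuadForm (H * B * Hᴴ) (v i)) := by
        simp only [re_trace_cfc_eq_sum_eigenvalues hA, hA.eigenvalues_eq, reQuadForm, v]
    _ ≤ ∑ i, (reQuadForm (H * cfc f B * Hᴴ) (v i) + reQuadForm (1 - H * Hᴴ) (v i) * f 0) := by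
        gcongr with i
        rw [hdefect]
        simp only [reQuadForm_mul_mul_conjTranspose]
        exact map_reQuadForm_le_reQuadForm_cfc_add hf hB hBs h0 (hnorm i)
    _ = _ := by
        rw [Finset.sum_add_distrib, ← Finset.sum_mul, ← re_trace_eq_sum_reQuadForm,
          ← re_trace_eq_sum_reQuadForm]

/-- Tr exp(H B H*) ≤ Tr(H exp(B) H*) + Tr(I - H H*) for Hermitian B and a contraction H. -/
theorem stmt2 {n : ℕ} (B H : Matrix (Fin n) (Fin n) ℂ)
    (hB : B.IsHermitian) (hH : (1 - Hᴴ * H).PosSemidef) :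
    trRe (mexp (H * B * Hᴴ)) ≤ trRe (H * mexp B * Hᴴ) + trRe (1 - H * Hᴴ) := by
  simpa [trRe, mexp] using
    stmt2_general convexOn_exp hB (Set.subset_univ _) (Set.mem_univ 0) hH
end

section
/- Let q ∈ (1,2], let H be an n×n contraction (H*H ≤ I), and let L be an n×n Hermitian matrix with I − H*H + (q−1)L ≥ 0. Then the trace function φ_q(A) = Tr[(I − H*H + (q−1)L + H* A^{q−1} H)^{1/(q−1)}] is concave on n×n positive definite matrices: for positive definite A₁, A₂ and t ∈ [0,1], φ_q(tA₁ + (1−t)A₂) ≥ t·φ_q(A₁) + (1−t)·φ_q(A₂). -/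
open Matrix ComplexOrder

/-- The trace functional φ_q(A) = Tr[(I - H*H + (q-1)L + H* A^(q-1) H)^(1/(q-1))]. -/
noncomputable def phiq {n : ℕ} (q : ℝ) (H L A : Matrix (Fin n) (Fin n) ℂ) : ℝ :=
  trRe (mpow (1 - Hᴴ * H + (q - 1) • L + Hᴴ * mpow A (q - 1) * H) (1 / (q - 1)))

/-!
Young's inequality gives the variational formula
`p Tr X^(1/p) = max_{Y ≥ 0} (Tr X Y^(1-p) - (1-p) Tr Y)`, attained at `Y = X^(1/p)`. A partial
maximum of a jointly concave function is concave, so with `X = C + K* A^p K` the theorem reduces to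
Lieb's theorem that `(A, B) ↦ Tr K* A^p K B^(1-p)` is jointly concave. For the latter,
`a^p b^(1-p)` is an integral of parallel sums `(t^(p-2) a) : (t^(p-1) b)`, and the parallel sum of
left multiplication by `A` and right multiplication by `B` is, as a quadratic form, an infimum of
functions that are linear in `(A, B)`.
-/

open MeasureTheory Set
open scoped MatrixOrder

section Concave

variable {E F ι : Type*} [AddCommGroup E] [Module ℝ E] [AddCommGroup F] [Module ℝ F]
  {s : Set E} {t : Set F}

theorem concaveOn_iInf [Nonempty ι] {f : ι → E → ℝ} (hf : ∀ i, ConcaveOn ℝ s (f i))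
    (hbdd : ∀ x ∈ s, BddBelow (range fun i => f i x)) :
    ConcaveOn ℝ s fun x => ⨅ i, f i x := by
  refine ⟨(hf (Classical.arbitrary ι)).1, fun x hx y hy a b ha hb hab => le_ciInf fun i => ?_⟩
  calc a • (⨅ i, f i x) + b • (⨅ i, f i y) ≤ a • f i x + b • f i y := by
        gcongr
        exacts [ciInf_le (hbdd x hx) i, ciInf_le (hbdd y hy) i]
    _ ≤ f i (a • x + b • y) := (hf i).2 hx hy ha hb hab

theorem concaveOn_comp_snd {g : F → ℝ} (hs : Convex ℝ s) (hg : ConcaveOn ℝ t g) :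
    ConcaveOn ℝ (s ×ˢ t) fun x => g x.2 :=
  (hg.comp_linearMap (LinearMap.snd ℝ E F)).subset (fun _ hx => hx.2) (hs.prod hg.1)

theorem concaveOn_of_isGreatest {f : E → ℝ} {g : E × F → ℝ} (hg : ConcaveOn ℝ (s ×ˢ t) g)
    (hf : ∀ x ∈ s, IsGreatest ((fun y => g (x, y)) '' t) (f x)) : ConcaveOn ℝ s f := by
  have hs : Convex ℝ s := fun x hx x' hx' a b ha hb hab => by
    obtain ⟨y, hy, -⟩ := (hf x hx).1
    obtain ⟨y', hy', -⟩ := (hf x' hx').1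
    exact (hg.1 (mk_mem_prod hx hy) (mk_mem_prod hx' hy') ha hb hab).1
  refine ⟨hs, fun x hx x' hx' a b ha hb hab => ?_⟩
  obtain ⟨y, hy, hxy⟩ := (hf x hx).1
  obtain ⟨y', hy', hxy'⟩ := (hf x' hx').1
  have hmem := hg.1 (mk_mem_prod hx hy) (mk_mem_prod hx' hy') ha hb hab
  calc a • f x + b • f x' = a • g (x, y) + b • g (x', y') := by rw [← hxy, ← hxy']
    _ ≤ g (a • (x, y) + b • (x', y')) :=
        hg.2 (mk_mem_prod hx hy) (mk_mem_prod hx' hy') ha hb hab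
    _ ≤ f (a • x + b • x') := (hf _ hmem.1).2 ⟨_, hmem.2, rfl⟩

end Concave

section ParallelSum

/-- The parallel sum `a : b = (a⁻¹ + b⁻¹)⁻¹` of nonnegative reals. In the form chosen here it
vanishes, as it should, when `a` or `b` does. -/
noncomputable def parallelSum (a b : ℝ) : ℝ := a * b / (a + b)

theorem add_norm_sq_eq_parallelSum_add {𝕜 E : Type*} [RCLike 𝕜] [NormedAddCommGroup E]
    [InnerProductSpace 𝕜 E] {a b : ℝ} (ha : 0 ≤ a) (hb : 0 ≤ b) (k z : E) :
    a * ‖z‖ ^ 2 + b * ‖k - z‖ ^ 2 =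
      parallelSum a b * ‖k‖ ^ 2 + (a + b) * ‖z - ((b / (a + b) : ℝ) : 𝕜) • k‖ ^ 2 := by
  rcases (add_nonneg ha hb).eq_or_lt with hab | hab
  · obtain ⟨rfl, rfl⟩ := (add_eq_zero_iff_of_nonneg ha hb).mp hab.symm
    simp [parallelSum]
  · rw [norm_sub_sq (𝕜 := 𝕜) k z, norm_sub_sq (𝕜 := 𝕜) z, inner_smul_right,
      RCLike.re_ofReal_mul, norm_smul, RCLike.norm_ofReal, mul_pow, sq_abs,
      inner_re_symm z k, parallelSum]
    field_simp
    ring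

theorem parallelSum_rpow_mul {p t a b : ℝ} (hp : p ∈ Ioo (0 : ℝ) 1) (ht : 0 < t) (ha : 0 ≤ a)
    (hb : 0 < b) :
    parallelSum (t ^ (p - 2) * a) (t ^ (p - 1) * b) = b * Real.rpowIntegrand₀₁ p t (a / b) := by
  have hpow : t ^ (p - 1) = t ^ (p - 2) * t := by
    rw [← Real.rpow_add_one ht.ne']; ring_nf
  have : 0 < t ^ (p - 2) := Real.rpow_pos_of_pos ht _
  rw [Real.rpowIntegrand₀₁_eq_pow_div hp ht.le (by positivity), parallelSum, hpow]
  field_simp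
  ring

theorem exists_measure_rpow_mul_rpow_eq_integral_parallelSum {p : ℝ} (hp : p ∈ Ioo (0 : ℝ) 1) :
    ∃ μ : Measure ℝ, ∀ a b : ℝ, 0 ≤ a → 0 ≤ b →
      IntegrableOn (fun t => parallelSum (t ^ (p - 2) * a) (t ^ (p - 1) * b)) (Ioi 0) μ ∧
      a ^ p * b ^ (1 - p) =
        ∫ t in Ioi 0, parallelSum (t ^ (p - 2) * a) (t ^ (p - 1) * b) ∂μ := by
  obtain ⟨μ, hμ⟩ := Real.exists_measure_rpow_eq_integral_rpowIntegrand₀₁ hp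
  refine ⟨μ, fun a b ha hb => ?_⟩
  rcases hb.eq_or_lt with rfl | hb
  · simp [parallelSum, Real.zero_rpow (sub_pos.mpr hp.2).ne']
  obtain ⟨hint, heq⟩ := hμ (a / b) (div_nonneg ha hb.le)
  have hcongr : EqOn (fun t => b * Real.rpowIntegrand₀₁ p t (a / b))
      (fun t => parallelSum (t ^ (p - 2) * a) (t ^ (p - 1) * b)) (Ioi 0) :=
    fun t ht => (parallelSum_rpow_mul hp ht ha hb).symm
  refine ⟨IntegrableOn.congr_fun (hint.const_mul b) hcongr measurableSet_Ioi, ?_⟩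
  rw [← setIntegral_congr_fun measurableSet_Ioi hcongr, integral_const_mul, ← heq,
    Real.div_rpow ha hb.le, Real.rpow_sub hb, Real.rpow_one]
  ring

end ParallelSum

theorem cfc_rpow_add_of_exponent_nonneg {A : Type*} [PartialOrder A] [Ring A] [StarRing A]
    [TopologicalSpace A] [StarOrderedRing A] [Algebra ℝ A]
    [ContinuousFunctionalCalculus ℝ A IsSelfAdjoint] [NonnegSpectrumClass ℝ A] (a : A) {x y : ℝ}
    (hx : 0 ≤ x) (hy : 0 ≤ y) : a ^ (x + y) = a ^ x * a ^ y := by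
  simp only [CFC.rpow_def]
  rw [← cfc_mul _ _ a (NNReal.continuous_rpow_const hx).continuousOn
    (NNReal.continuous_rpow_const hy).continuousOn]
  simp only [NNReal.rpow_add_of_nonneg _ hx hy]

section LeftRightForm

variable {𝕜 m n : Type*} [RCLike 𝕜] [Fintype m] [DecidableEq m] [Fintype n] [DecidableEq n]
  {A : Matrix m m 𝕜} {B : Matrix n n 𝕜}

/-- The matrix of `K` in the eigenbases of the Hermitian matrices `A` (rows) and `B` (columns),
that is, the coordinates of `K` in a joint eigenbasis of the commuting operators of left
multiplication by `A` and right multiplication by `B`. -/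
noncomputable def eigenCoord (hA : A.IsHermitian) (hB : B.IsHermitian) :
    Matrix m n 𝕜 ≃ₗ[𝕜] Matrix m n 𝕜 where
  toFun K :=
    star (hA.eigenvectorUnitary : Matrix m m 𝕜) * K * (hB.eigenvectorUnitary : Matrix n n 𝕜)
  invFun K :=
    (hA.eigenvectorUnitary : Matrix m m 𝕜) * K * star (hB.eigenvectorUnitary : Matrix n n 𝕜)
  map_add' K Z := by rw [Matrix.mul_add, Matrix.add_mul]
  map_smul' c K := by rw [Matrix.mul_smul, Matrix.smul_mul, RingHom.id_apply]
  left_inv K := by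
    simp [← Matrix.mul_assoc, Matrix.mul_assoc _ _ (star _)]
  right_inv K := by
    simp [← Matrix.mul_assoc, Matrix.mul_assoc _ (star _)]

/-- The quadratic form `⟨K, F(L_A, R_B) K⟩` for the Hilbert–Schmidt inner product, where `L_A` and
`R_B` are left multiplication by `A` and right multiplication by `B`, and the function `F` is
applied to this commuting pair by the joint functional calculus. -/
noncomputable def leftRightForm (hA : A.IsHermitian) (hB : B.IsHermitian) (F : ℝ → ℝ → ℝ)
    (K : Matrix m n 𝕜) : ℝ :=
  ∑ i, ∑ j, F (hA.eigenvalues i) (hB.eigenvalues j) * ‖eigenCoord hA hB K i j‖ ^ 2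

variable (hA : A.IsHermitian) (hB : B.IsHermitian)

theorem re_trace_conj_cfc_mul_cfc (f g : ℝ → ℝ) (K : Matrix m n 𝕜) :
    RCLike.re (Kᴴ * cfc f A * K * cfc g B).trace =
      leftRightForm hA hB (fun a b => f a * g b) K := by
  have htrace : (Kᴴ * cfc f A * K * cfc g B).trace =
      ((eigenCoord hA hB K)ᴴ * diagonal (fun i => (f (hA.eigenvalues i) : 𝕜)) *
        eigenCoord hA hB K * diagonal (fun j => (g (hB.eigenvalues j) : 𝕜))).trace := by
    rw [hA.cfc_eq, hB.cfc_eq, IsHermitian.cfc, IsHermitian.cfc, Unitary.conjStarAlgAut_apply,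
      Unitary.conjStarAlgAut_apply]
    simp only [← Matrix.mul_assoc]
    rw [trace_mul_comm]
    simp only [eigenCoord, LinearEquiv.coe_mk, LinearMap.coe_mk, AddHom.coe_mk, conjTranspose_mul,
      star_eq_conjTranspose, conjTranspose_conjTranspose, Matrix.mul_assoc]
    rfl
  rw [htrace, trace, map_sum, leftRightForm, Finset.sum_comm]
  refine Finset.sum_congr rfl fun j _ => ?_
  rw [diag_apply, mul_diagonal, mul_apply, Finset.sum_mul, map_sum]
  refine Finset.sum_congr rfl fun i _ => ?_
  rw [mul_diagonal, conjTranspose_apply, RCLike.star_def]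
  calc RCLike.re (starRingEnd 𝕜 (eigenCoord hA hB K i j) * (f (hA.eigenvalues i) : 𝕜) *
        eigenCoord hA hB K i j * (g (hB.eigenvalues j) : 𝕜))
      = RCLike.re ((f (hA.eigenvalues i) : 𝕜) * (g (hB.eigenvalues j) : 𝕜) *
        (starRingEnd 𝕜 (eigenCoord hA hB K i j) * eigenCoord hA hB K i j)) := by ring_nf
    _ = f (hA.eigenvalues i) * g (hB.eigenvalues j) * ‖eigenCoord hA hB K i j‖ ^ 2 := by
        rw [RCLike.conj_mul]; norm_cast

theorem re_trace_conj_cfc (f : ℝ → ℝ) (K : Matrix m n 𝕜) :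
    RCLike.re (Kᴴ * cfc f A * K).trace = leftRightForm hA hB (fun a _ => f a) K := by
  have h := re_trace_conj_cfc_mul_cfc hA hB f (fun _ => 1) K
  have hone : cfc (fun _ : ℝ => (1 : ℝ)) B = 1 := cfc_const_one ℝ B hB
  rw [hone, Matrix.mul_one] at h
  simpa only [mul_one] using h

theorem re_trace_mul_cfc_mul_conj (g : ℝ → ℝ) (K : Matrix m n 𝕜) :
    RCLike.re (K * cfc g B * Kᴴ).trace = leftRightForm hA hB (fun _ b => g b) K := by
  have h := re_trace_conj_cfc_mul_cfc hA hB (fun _ => 1) g K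
  have hone : cfc (fun _ : ℝ => (1 : ℝ)) A = 1 := cfc_const_one ℝ A hA
  rw [hone, Matrix.mul_one, Matrix.mul_assoc, trace_mul_comm] at h
  simpa only [one_mul] using h

theorem leftRightForm_add (F G : ℝ → ℝ → ℝ) (K : Matrix m n 𝕜) :
    leftRightForm hA hB (fun a b => F a b + G a b) K =
      leftRightForm hA hB F K + leftRightForm hA hB G K := by
  simp only [leftRightForm, add_mul, Finset.sum_add_distrib]

theorem leftRightForm_mono {F G : ℝ → ℝ → ℝ}
    (hFG : ∀ i j, F (hA.eigenvalues i) (hB.eigenvalues j) ≤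
      G (hA.eigenvalues i) (hB.eigenvalues j)) (K : Matrix m n 𝕜) :
    leftRightForm hA hB F K ≤ leftRightForm hA hB G K :=
  Finset.sum_le_sum fun i _ => Finset.sum_le_sum fun j _ => by gcongr; exact hFG i j

section Integral

variable {α : Type*} [MeasurableSpace α] {μ : Measure α} {F : α → ℝ → ℝ → ℝ}

theorem integrable_leftRightForm
    (hF : ∀ i j, Integrable (fun t => F t (hA.eigenvalues i) (hB.eigenvalues j)) μ)
    (K : Matrix m n 𝕜) : Integrable (fun t => leftRightForm hA hB (F t) K) μ :=
  integrable_finsetSum _ fun i _ => integrable_finsetSum _ fun j _ => (hF i j).mul_const _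

theorem integral_leftRightForm
    (hF : ∀ i j, Integrable (fun t => F t (hA.eigenvalues i) (hB.eigenvalues j)) μ)
    (K : Matrix m n 𝕜) :
    ∫ t, leftRightForm hA hB (F t) K ∂μ = leftRightForm hA hB (fun a b => ∫ t, F t a b ∂μ) K := by
  have hint := fun i j => (hF i j).mul_const (‖eigenCoord hA hB K i j‖ ^ 2)
  simp only [leftRightForm]
  rw [integral_finsetSum _ fun i _ => integrable_finsetSum _ fun j _ => hint i j]
  refine Finset.sum_congr rfl fun i _ => ?_
  rw [integral_finsetSum _ fun j _ => hint i j]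
  exact Finset.sum_congr rfl fun j _ => integral_mul_const _ _

end Integral

end LeftRightForm

section ParallelForm

variable {𝕜 m n : Type*} [RCLike 𝕜] [Fintype m] [Fintype n]

/-- The parallel sum of left multiplication by `A` and right multiplication by `B`, as a quadratic
form in `K`. It is encoded by its variational characterisation
`⟨K, (S : T) K⟩ = ⨅ Z, ⟨Z, S Z⟩ + ⟨K - Z, T (K - Z)⟩`. -/
noncomputable def parallelForm (A : Matrix m m 𝕜) (B : Matrix n n 𝕜) (K : Matrix m n 𝕜) : ℝ :=
  ⨅ Z : Matrix m n 𝕜, (RCLike.re (Zᴴ * A * Z).trace + RCLike.re ((K - Z) * B * (K - Z)ᴴ).trace)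

theorem concaveOn_parallelForm (K : Matrix m n 𝕜) :
    ConcaveOn ℝ (Ici 0 ×ˢ Ici 0)
      fun X : Matrix m m 𝕜 × Matrix n n 𝕜 => parallelForm X.1 X.2 K := by
  refine concaveOn_iInf (fun Z => ?_) fun X ⟨hA, hB⟩ => ⟨0, ?_⟩
  · have hlin : IsLinearMap ℝ fun X : Matrix m m 𝕜 × Matrix n n 𝕜 =>
        RCLike.re (Zᴴ * X.1 * Z).trace + RCLike.re ((K - Z) * X.2 * (K - Z)ᴴ).trace := by
      constructor <;> intros <;>
        simp only [Prod.fst_add, Prod.snd_add, Prod.smul_fst, Prod.smul_snd, Matrix.mul_add,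
          Matrix.add_mul, Matrix.mul_smul, Matrix.smul_mul, trace_add, trace_smul, map_add,
          RCLike.smul_re, smul_eq_mul] <;> ring
    exact (hlin.mk' _).concaveOn ((convex_Ici 0).prod (convex_Ici 0))
  · rintro _ ⟨Z, rfl⟩
    have hZ := (LE.le.posSemidef hA).conjTranspose_mul_mul_same Z
    have hKZ := (LE.le.posSemidef hB).mul_mul_conjTranspose_same (K - Z)
    exact add_nonneg (RCLike.nonneg_iff.mp hZ.trace_nonneg).1
      (RCLike.nonneg_iff.mp hKZ.trace_nonneg).1

theorem concaveOn_parallelForm_smul_smul {c d : ℝ} (hc : 0 ≤ c) (hd : 0 ≤ d) (K : Matrix m n 𝕜) :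
    ConcaveOn ℝ (Ici 0 ×ˢ Ici 0)
      fun X : Matrix m m 𝕜 × Matrix n n 𝕜 => parallelForm (c • X.1) (d • X.2) K := by
  let scale : Matrix m m 𝕜 × Matrix n n 𝕜 →ₗ[ℝ] Matrix m m 𝕜 × Matrix n n 𝕜 :=
    (LinearMap.lsmul ℝ _ c).prodMap (LinearMap.lsmul ℝ _ d)
  have hscale : Ici 0 ×ˢ Ici 0 ⊆ scale ⁻¹' (Ici 0 ×ˢ Ici 0) := fun X hX =>
    mem_prod.mpr ⟨smul_nonneg hc (mem_Ici.mp hX.1), smul_nonneg hd (mem_Ici.mp hX.2)⟩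
  exact ((concaveOn_parallelForm K).comp_linearMap scale).subset hscale
    ((convex_Ici 0).prod (convex_Ici 0))

variable [DecidableEq m] [DecidableEq n] {A : Matrix m m 𝕜} {B : Matrix n n 𝕜}

theorem leftRightForm_parallelSum (hA : A.IsHermitian) (hB : B.IsHermitian) {f g : ℝ → ℝ}
    (hf : ∀ i, 0 ≤ f (hA.eigenvalues i)) (hg : ∀ j, 0 ≤ g (hB.eigenvalues j))
    (K : Matrix m n 𝕜) :
    leftRightForm hA hB (fun a b => parallelSum (f a) (g b)) K =
      parallelForm (cfc f A) (cfc g B) K := by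
  let weight i j : 𝕜 := ((g (hB.eigenvalues j) /
    (f (hA.eigenvalues i) + g (hB.eigenvalues j)) : ℝ) : 𝕜)
  have hsquare (Z : Matrix m n 𝕜) :
      RCLike.re (Zᴴ * cfc f A * Z).trace + RCLike.re ((K - Z) * cfc g B * (K - Z)ᴴ).trace =
        leftRightForm hA hB (fun a b => parallelSum (f a) (g b)) K +
          ∑ i, ∑ j, (f (hA.eigenvalues i) + g (hB.eigenvalues j)) *
            ‖eigenCoord hA hB Z i j - weight i j • eigenCoord hA hB K i j‖ ^ 2 := by
    rw [re_trace_conj_cfc hA hB, re_trace_mul_cfc_mul_conj hA hB]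
    simp only [leftRightForm, ← Finset.sum_add_distrib, map_sub, Matrix.sub_apply]
    exact Finset.sum_congr rfl fun i _ => Finset.sum_congr rfl fun j _ =>
      add_norm_sq_eq_parallelSum_add (hf i) (hg j) _ _
  refine (IsLeast.csInf_eq ⟨?_, ?_⟩).symm
  · refine ⟨(eigenCoord hA hB).symm
      (Matrix.of fun i j => weight i j • eigenCoord hA hB K i j), ?_⟩
    exact (hsquare _).trans (by simp)
  · rintro _ ⟨Z, rfl⟩
    refine (le_add_of_nonneg_right ?_).trans_eq (hsquare Z).symm
    exact Finset.sum_nonneg fun i _ => Finset.sum_nonneg fun j _ =>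
      mul_nonneg (add_nonneg (hf i) (hg j)) (sq_nonneg _)

theorem parallelForm_smul_smul (hA : A.PosSemidef) (hB : B.PosSemidef) {c d : ℝ} (hc : 0 ≤ c)
    (hd : 0 ≤ d) (K : Matrix m n 𝕜) :
    parallelForm (c • A) (d • B) K =
      leftRightForm hA.1 hB.1 (fun a b => parallelSum (c * a) (d * b)) K := by
  have hcA : cfc (c * ·) A = c • A := cfc_const_mul_id c A hA.1
  have hdB : cfc (d * ·) B = d • B := cfc_const_mul_id d B hB.1
  rw [← hcA, ← hdB]
  exact (leftRightForm_parallelSum hA.1 hB.1 (fun i => mul_nonneg hc (hA.eigenvalues_nonneg i))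
    (fun j => mul_nonneg hd (hB.eigenvalues_nonneg j)) K).symm

end ParallelForm

section Lieb

variable {𝕜 m n : Type*} [RCLike 𝕜] [Fintype m] [DecidableEq m] [Fintype n] [DecidableEq n]
  {p : ℝ}

theorem re_trace_conj_rpow_mul_rpow {A : Matrix m m 𝕜} {B : Matrix n n 𝕜} (hA : A.PosSemidef)
    (hB : B.PosSemidef) (r s : ℝ) (K : Matrix m n 𝕜) :
    RCLike.re (Kᴴ * A ^ r * K * B ^ s).trace =
      leftRightForm hA.1 hB.1 (fun a b => a ^ r * b ^ s) K := by
  rw [CFC.rpow_eq_cfc_real hA.nonneg, CFC.rpow_eq_cfc_real hB.nonneg,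
    re_trace_conj_cfc_mul_cfc hA.1 hB.1]

theorem exists_measure_re_trace_eq_integral_parallelForm (hp : p ∈ Ioo (0 : ℝ) 1) :
    ∃ μ : Measure ℝ, ∀ {A : Matrix m m 𝕜} {B : Matrix n n 𝕜}, 0 ≤ A → 0 ≤ B →
      ∀ K : Matrix m n 𝕜,
        IntegrableOn (fun t => parallelForm (t ^ (p - 2) • A) (t ^ (p - 1) • B) K) (Ioi 0) μ ∧
        RCLike.re (Kᴴ * A ^ p * K * B ^ (1 - p)).trace =
          ∫ t in Ioi 0, parallelForm (t ^ (p - 2) • A) (t ^ (p - 1) • B) K ∂μ := by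
  obtain ⟨μ, hμ⟩ := exists_measure_rpow_mul_rpow_eq_integral_parallelSum hp
  refine ⟨μ, fun {A B} hA hB K => ?_⟩
  replace hA := hA.posSemidef
  replace hB := hB.posSemidef
  have hscalar i j := hμ _ _ (hA.eigenvalues_nonneg i) (hB.eigenvalues_nonneg j)
  have hform : EqOn (fun t => parallelForm (t ^ (p - 2) • A) (t ^ (p - 1) • B) K)
      (fun t => leftRightForm hA.1 hB.1
        (fun a b => parallelSum (t ^ (p - 2) * a) (t ^ (p - 1) * b)) K) (Ioi 0) := fun t ht =>
    parallelForm_smul_smul hA hB (Real.rpow_nonneg (le_of_lt ht) _)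
      (Real.rpow_nonneg (le_of_lt ht) _) K
  refine ⟨(integrableOn_congr_fun hform measurableSet_Ioi).mpr <| integrable_leftRightForm
    (F := fun t a b => parallelSum (t ^ (p - 2) * a) (t ^ (p - 1) * b)) hA.1 hB.1
    (fun i j => (hscalar i j).1) K, ?_⟩
  rw [setIntegral_congr_fun measurableSet_Ioi hform, integral_leftRightForm
    (F := fun t a b => parallelSum (t ^ (p - 2) * a) (t ^ (p - 1) * b)) hA.1 hB.1
    (fun i j => (hscalar i j).1), re_trace_conj_rpow_mul_rpow hA hB]
  simp only [leftRightForm, (hscalar _ _).2]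

theorem concaveOn_re_trace_conj_rpow_mul_rpow_of_mem_Ioo (hp : p ∈ Ioo (0 : ℝ) 1)
    (K : Matrix m n 𝕜) :
    ConcaveOn ℝ (Ici 0 ×ˢ Ici 0) fun X : Matrix m m 𝕜 × Matrix n n 𝕜 =>
      RCLike.re (Kᴴ * X.1 ^ p * K * X.2 ^ (1 - p)).trace := by
  obtain ⟨μ, hμ⟩ := exists_measure_re_trace_eq_integral_parallelForm (𝕜 := 𝕜) (m := m) (n := n) hp
  have hcone : Convex ℝ ((Ici 0 : Set (Matrix m m 𝕜)) ×ˢ (Ici 0 : Set (Matrix n n 𝕜))) :=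
    (convex_Ici 0).prod (convex_Ici 0)
  refine (integral_concaveOn_of_integrand_ae (μ := μ.restrict (Ioi 0)) hcone ?_
    fun X hX => (hμ hX.1 hX.2 K).1).congr fun X hX => (hμ hX.1 hX.2 K).2.symm
  filter_upwards [ae_restrict_mem measurableSet_Ioi] with t ht using
    concaveOn_parallelForm_smul_smul (Real.rpow_nonneg (le_of_lt ht) _)
      (Real.rpow_nonneg (le_of_lt ht) _) K

theorem concaveOn_re_trace_conj_rpow_mul_rpow (hp : p ∈ Icc (0 : ℝ) 1) (K : Matrix m n 𝕜) :
    ConcaveOn ℝ (Ici 0 ×ˢ Ici 0) fun X : Matrix m m 𝕜 × Matrix n n 𝕜 =>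
      RCLike.re (Kᴴ * X.1 ^ p * K * X.2 ^ (1 - p)).trace := by
  have hcone : Convex ℝ ((Ici 0 : Set (Matrix m m 𝕜)) ×ˢ (Ici 0 : Set (Matrix n n 𝕜))) :=
    (convex_Ici 0).prod (convex_Ici 0)
  rcases hp.1.eq_or_lt with rfl | hp0
  · have hlin : IsLinearMap ℝ fun X : Matrix m m 𝕜 × Matrix n n 𝕜 =>
        RCLike.re (Kᴴ * K * X.2).trace := by
      constructor <;> intros <;> simp [Matrix.mul_add, RCLike.smul_re]
    refine ((hlin.mk' _).concaveOn hcone).congr fun X hX => ?_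
    simp [CFC.rpow_zero X.1 hX.1, CFC.rpow_one X.2 hX.2]
  rcases hp.2.eq_or_lt with rfl | hp1
  · have hlin : IsLinearMap ℝ fun X : Matrix m m 𝕜 × Matrix n n 𝕜 =>
        RCLike.re (Kᴴ * X.1 * K).trace := by
      constructor <;> intros <;> simp [Matrix.mul_add, Matrix.add_mul, RCLike.smul_re]
    refine ((hlin.mk' _).concaveOn hcone).congr fun X hX => ?_
    simp [CFC.rpow_one X.1 hX.1, CFC.rpow_zero X.2 hX.2]
  exact concaveOn_re_trace_conj_rpow_mul_rpow_of_mem_Ioo ⟨hp0, hp1⟩ K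

theorem concaveOn_re_trace_mul_rpow (hp : p ∈ Icc (0 : ℝ) 1) {C : Matrix n n 𝕜} (hC : 0 ≤ C) :
    ConcaveOn ℝ (Ici 0) fun Y : Matrix n n 𝕜 => RCLike.re (C * Y ^ (1 - p)).trace := by
  obtain ⟨D, rfl⟩ := CStarAlgebra.nonneg_iff_eq_star_mul_self.mp hC
  refine ⟨convex_Ici 0, fun Y hY Y' hY' a b ha hb hab => ?_⟩
  have hone : (0 : Matrix n n 𝕜) ≤ 1 := PosSemidef.one.nonneg
  have h := (concaveOn_re_trace_conj_rpow_mul_rpow hp D).2 (x := (1, Y)) (y := (1, Y'))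
    ⟨hone, hY⟩ ⟨hone, hY'⟩ ha hb hab
  simpa [← add_smul, hab, star_eq_conjTranspose] using h

end Lieb

theorem conjTranspose_mul_rpow_mul_nonneg {𝕜 m n : Type*} [RCLike 𝕜] [Fintype m] [DecidableEq m]
    [Finite n] (K : Matrix m n 𝕜) (A : Matrix m m 𝕜) (p : ℝ) : 0 ≤ Kᴴ * A ^ p * K :=
  (CFC.rpow_nonneg.posSemidef.conjTranspose_mul_mul_same K).nonneg

section Variational

variable {𝕜 m n : Type*} [RCLike 𝕜] [Fintype m] [DecidableEq m] [Fintype n] [DecidableEq n]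
  {p : ℝ}

theorem re_trace_rpow_mul_rpow_le {A B : Matrix n n 𝕜} (hp : p ∈ Icc (0 : ℝ) 1) (hA : 0 ≤ A)
    (hB : 0 ≤ B) :
    RCLike.re (A ^ p * B ^ (1 - p)).trace ≤
      p * RCLike.re A.trace + (1 - p) * RCLike.re B.trace := by
  replace hA := hA.posSemidef
  replace hB := hB.posSemidef
  have hpA : cfc (p * ·) A = p • A := cfc_const_mul_id p A hA.1
  have hpB : cfc ((1 - p) * ·) B = (1 - p) • B := cfc_const_mul_id (1 - p) B hB.1
  have hAform := re_trace_conj_cfc hA.1 hB.1 (p * ·) 1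
  have hBform := re_trace_mul_cfc_mul_conj hA.1 hB.1 ((1 - p) * ·) 1
  calc RCLike.re (A ^ p * B ^ (1 - p)).trace
      = leftRightForm hA.1 hB.1 (fun a b => a ^ p * b ^ (1 - p)) 1 := by
        simpa using re_trace_conj_rpow_mul_rpow hA hB p (1 - p) 1
    _ ≤ leftRightForm hA.1 hB.1 (fun a b => p * a + (1 - p) * b) 1 :=
        leftRightForm_mono _ _ (fun i j => Real.geom_mean_le_arith_mean2_weighted hp.1
          (sub_nonneg.mpr hp.2) (hA.eigenvalues_nonneg i) (hB.eigenvalues_nonneg j)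
          (add_sub_cancel _ _)) 1
    _ = p * RCLike.re A.trace + (1 - p) * RCLike.re B.trace := by
        rw [leftRightForm_add, ← hAform, ← hBform, hpA, hpB]
        simp [RCLike.smul_re]

theorem isGreatest_re_trace_mul_rpow_sub (hp : p ∈ Ioc (0 : ℝ) 1) {X : Matrix n n 𝕜}
    (hX : 0 ≤ X) :
    IsGreatest ((fun Y => RCLike.re (X * Y ^ (1 - p)).trace - (1 - p) * RCLike.re Y.trace) '' Ici 0)
      (p * RCLike.re (X ^ (1 / p)).trace) := by
  have hroot : (X ^ (1 / p)) ^ p = X := by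
    rw [CFC.rpow_rpow_of_exponent_nonneg X _ _ (one_div_nonneg.mpr hp.1.le) hp.1.le hX,
      one_div_mul_cancel hp.1.ne', CFC.rpow_one X hX]
  have hnonneg : 0 ≤ X ^ (1 / p) := CFC.rpow_nonneg
  constructor
  · refine ⟨X ^ (1 / p), hnonneg, ?_⟩
    have hmul : X * (X ^ (1 / p)) ^ (1 - p) = X ^ (1 / p) := by
      nth_rw 1 [← hroot]
      rw [← cfc_rpow_add_of_exponent_nonneg _ hp.1.le (sub_nonneg.mpr hp.2), add_sub_cancel,
        CFC.rpow_one _ hnonneg]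
    simp only [hmul]
    ring
  · rintro _ ⟨Y, hY, rfl⟩
    have h := re_trace_rpow_mul_rpow_le (Ioc_subset_Icc_self hp) hnonneg hY
    rw [hroot] at h
    exact sub_le_iff_le_add.mpr h

theorem concaveOn_re_trace_add_conj_rpow_mul_rpow_sub (hp : p ∈ Icc (0 : ℝ) 1) {C : Matrix n n 𝕜}
    (hC : 0 ≤ C) (K : Matrix m n 𝕜) :
    ConcaveOn ℝ (Ici 0 ×ˢ Ici 0) fun X : Matrix m m 𝕜 × Matrix n n 𝕜 =>
      RCLike.re ((C + Kᴴ * X.1 ^ p * K) * X.2 ^ (1 - p)).trace -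
        (1 - p) * RCLike.re X.2.trace := by
  have htrace : ConcaveOn ℝ (Ici 0) fun Y : Matrix n n 𝕜 => -(1 - p) * RCLike.re Y.trace := by
    have hlin : IsLinearMap ℝ fun Y : Matrix n n 𝕜 => -(1 - p) * RCLike.re Y.trace := by
      constructor <;> intros <;> simp [RCLike.smul_re] <;> ring
    exact (hlin.mk' _).concaveOn (convex_Ici 0)
  have hconst := concaveOn_comp_snd (convex_Ici (0 : Matrix m m 𝕜))
    ((concaveOn_re_trace_mul_rpow hp hC).add htrace)
  refine ((concaveOn_re_trace_conj_rpow_mul_rpow hp K).add hconst).congr fun X _ => ?_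
  simp only [Pi.add_apply, Matrix.add_mul, trace_add, map_add]
  ring

theorem stmt6_general (hp : p ∈ Ioc (0 : ℝ) 1) {C : Matrix n n 𝕜} (hC : 0 ≤ C)
    (K : Matrix m n 𝕜) :
    ConcaveOn ℝ (Ici 0) fun A : Matrix m m 𝕜 =>
      RCLike.re ((C + Kᴴ * A ^ p * K) ^ (1 / p)).trace := by
  have hjoint := concaveOn_re_trace_add_conj_rpow_mul_rpow_sub (Ioc_subset_Icc_self hp) hC K
  have hmax (A : Matrix m m 𝕜) := isGreatest_re_trace_mul_rpow_sub hp
    (add_nonneg hC (conjTranspose_mul_rpow_mul_nonneg K A p))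
  have hmul : ConcaveOn ℝ (Ici 0) fun A : Matrix m m 𝕜 =>
      p * RCLike.re ((C + Kᴴ * A ^ p * K) ^ (1 / p)).trace :=
    concaveOn_of_isGreatest hjoint fun A _ => hmax A
  have hinv := hmul.smul (inv_nonneg.mpr hp.1.le)
  simpa only [smul_eq_mul, inv_mul_cancel_left₀ hp.1.ne'] using hinv

end Variational

theorem mpow_eq_rpow {n : ℕ} {A : Matrix (Fin n) (Fin n) ℂ} (hA : 0 ≤ A) (p : ℝ) :
    mpow A p = A ^ p :=
  (CFC.rpow_eq_cfc_real hA).symm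

theorem phiq_eq_re_trace_rpow {n : ℕ} {q : ℝ} {H L A : Matrix (Fin n) (Fin n) ℂ}
    (hpos : (1 - Hᴴ * H + (q - 1) • L).PosSemidef) (hA : 0 ≤ A) :
    phiq q H L A =
      RCLike.re ((1 - Hᴴ * H + (q - 1) • L + Hᴴ * A ^ (q - 1) * H) ^ (1 / (q - 1))).trace := by
  have hX : 0 ≤ 1 - Hᴴ * H + (q - 1) • L + Hᴴ * A ^ (q - 1) * H :=
    add_nonneg hpos.nonneg (conjTranspose_mul_rpow_mul_nonneg H A _)
  rw [phiq, mpow_eq_rpow hA, mpow_eq_rpow hX]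
  rfl

/-- Concavity of φ_q on positive definite matrices for q ∈ (1,2]. -/
theorem stmt6 {n : ℕ} (q : ℝ) (hq : q ∈ Set.Ioc (1 : ℝ) 2)
    (H L : Matrix (Fin n) (Fin n) ℂ) (hH : (1 - Hᴴ * H).PosSemidef)
    (hL : L.IsHermitian) (hpos : (1 - Hᴴ * H + (q - 1) • L).PosSemidef)
    (A₁ A₂ : Matrix (Fin n) (Fin n) ℂ) (hA₁ : A₁.PosDef) (hA₂ : A₂.PosDef)
    (t : ℝ) (ht : t ∈ Set.Icc (0 : ℝ) 1) :
    phiq q H L (t • A₁ + (1 - t) • A₂) ≥ t * phiq q H L A₁ + (1 - t) * phiq q H L A₂ := by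
  have hq' : q - 1 ∈ Ioc (0 : ℝ) 1 := ⟨sub_pos.mpr hq.1, by linarith [hq.2]⟩
  exact ((stmt6_general hq' hpos.nonneg H).congr fun _ hA => (phiq_eq_re_trace_rpow hpos hA).symm).2
    hA₁.posSemidef.nonneg hA₂.posSemidef.nonneg ht.1 (sub_nonneg.mpr ht.2) (add_sub_cancel _ _)
end
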